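/- Let occ(σ) be the number of occurrences in σ of the mesh pattern Nr. 27, where an occurrence is a pair of indices i < j with a = σ_i < σ_j = b such that: every element before position i has value less than a; every element strictly between positions i and j has value greater than b; and every element after position j has value strictly between a and b. Let E(t,u) = Σ_{n≥0} t^n Σ_{σ∈K_n} u^{occ(σ)} and set D = 1 + t(1+u+ut) + t(1−u)·A(t). Then (1+t)·D·E(t,u) = ((1+t)·D + t^2(1−u)·(D − A(t)^2))·A(t) as formal power series in t over ℚ[u]. -/

import Mathlib

/-- A permutation of `{0, …, n-1}` is a *king permutation* if consecutive entries
differ by more than 1 in absolute value. -/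
def IsKing {n : ℕ} (σ : Equiv.Perm (Fin n)) : Prop :=
  ∀ i : Fin n, ∀ h : (i : ℕ) + 1 < n,
    1 < |((σ ⟨(i : ℕ) + 1, h⟩ : ℕ) : ℤ) - ((σ i : ℕ) : ℤ)|

/-- `kingCount n = A_n`, the number of king permutations of length `n`. -/
noncomputable def kingCount (n : ℕ) : ℕ :=
  Nat.card {σ : Equiv.Perm (Fin n) // IsKing σ}

/-- `A(t)` regarded as a power series over `ℚ[u]` (constant-polynomial coefficients). -/
noncomputable def kingAu : PowerSeries (Polynomial ℚ) :=
  PowerSeries.mk fun n => (kingCount n : Polynomial ℚ)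

/-- `u` viewed as a constant power series over `ℚ[u]`. -/
noncomputable def U : PowerSeries (Polynomial ℚ) :=
  PowerSeries.C Polynomial.X

/-- `t`, the power series variable. -/
noncomputable def T : PowerSeries (Polynomial ℚ) :=
  PowerSeries.X

/-- An occurrence of the mesh pattern Nr. 27 in `σ`. -/
def OccP {n : ℕ} (σ : Equiv.Perm (Fin n)) (i j : Fin n) : Prop :=
  i < j ∧ σ i < σ j ∧
    (∀ k : Fin n, k < i → σ k < σ i) ∧
    (∀ k : Fin n, i < k → k < j → σ j < σ k) ∧
    (∀ k : Fin n, j < k → σ i < σ k ∧ σ k < σ j)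

/-- The number of occurrences of the mesh pattern Nr. 27 in `σ`. -/
noncomputable def occP {n : ℕ} (σ : Equiv.Perm (Fin n)) : ℕ :=
  Nat.card {p : Fin n × Fin n // OccP σ p.1 p.2}

-- `E(t,u) = Σ_{n≥0} t^n Σ_{σ∈K_n} u^{occ(σ)}`, a power series in `t` over `ℚ[u]`.
open Classical in
noncomputable def Etu : PowerSeries (Polynomial ℚ) :=
  PowerSeries.mk fun n =>
    ∑ σ : Equiv.Perm (Fin n),
      if IsKing σ then (Polynomial.X : Polynomial ℚ) ^ occP σ else 0

/-- Lists that are permutations of `0, …, length - 1`. -/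
def PM (l : List ℕ) : Prop := l.Nodup ∧ ∀ x ∈ l, x < l.length

/-- King condition on lists. -/
def KG (l : List ℕ) : Prop := l.IsChain (fun x y => x + 1 < y ∨ y + 1 < x)

/-- The relation for strong points. -/
def stR (a x y : ℕ) : Prop := (y = a → x < a) ∧ (x = a → a < y)

/-- The relation for skew strong points. -/
def skR (a x y : ℕ) : Prop := (y = a → a < x) ∧ (x = a → y < a)

/-- The relation for occurrences. -/
def ocR (a b x y : ℕ) : Prop :=
  (y = a → x < a) ∧ (x = a → a < y) ∧ (y = b → x ≤ a ∨ b < x) ∧ (x = b → a < y ∧ y < b)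

open Classical in
noncomputable def stS (l : List ℕ) : Finset ℕ :=
  l.toFinset.filter (fun a => l.Pairwise (stR a))

open Classical in
noncomputable def skS (l : List ℕ) : Finset ℕ :=
  l.toFinset.filter (fun a => l.Pairwise (skR a))

open Classical in
noncomputable def ocS (l : List ℕ) : Finset (ℕ × ℕ) :=
  (l.toFinset ×ˢ l.toFinset).filter (fun p => p.1 < p.2 ∧ l.Pairwise (ocR p.1 p.2))

/-- Joining two lists by a strong point. -/
def JJ (x y : List ℕ) : List ℕ := x ++ x.length :: y.map (· + (x.length + 1))

lemma mem_stS {l : List ℕ} {a : ℕ} : a ∈ stS l ↔ a ∈ l ∧ l.Pairwise (stR a) := by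
  simp [stS]

lemma mem_skS {l : List ℕ} {a : ℕ} : a ∈ skS l ↔ a ∈ l ∧ l.Pairwise (skR a) := by
  simp [skS]

lemma mem_ocS {l : List ℕ} {a b : ℕ} :
    (a, b) ∈ ocS l ↔ (a ∈ l ∧ b ∈ l) ∧ a < b ∧ l.Pairwise (ocR a b) := by
  simp [ocS]

lemma stR_triv {l : List ℕ} {a : ℕ} (h : a ∉ l) : l.Pairwise (stR a) := by
  refine List.Pairwise.imp_of_mem (R := fun _ _ => True) ?_ (by simp [List.pairwise_iff_getElem])
  intro x y hx hy _
  exact ⟨fun e => absurd (e ▸ hy) h, fun e => absurd (e ▸ hx) h⟩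

lemma skS_reverse (l : List ℕ) : skS l.reverse = stS l := by
  ext a
  rw [mem_skS, mem_stS, List.pairwise_reverse, List.mem_reverse]
  have : (fun x y => skR a y x) = stR a := by
    funext x y
    simp [skR, stR, and_comm]
  rw [this]

lemma stS_map (l : List ℕ) (k : ℕ) : stS (l.map (· + k)) = (stS l).image (· + k) := by
  ext a
  simp only [mem_stS, Finset.mem_image, List.mem_map, List.pairwise_map]
  constructor
  · rintro ⟨⟨b, hb, rfl⟩, h⟩
    exact ⟨b, ⟨hb, h.imp (by simp [stR])⟩, rfl⟩
  · rintro ⟨b, ⟨hb, h⟩, rfl⟩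
    exact ⟨⟨b, hb, rfl⟩, h.imp (by simp [stR])⟩

lemma skS_map (l : List ℕ) (k : ℕ) : skS (l.map (· + k)) = (skS l).image (· + k) := by
  ext a
  simp only [mem_skS, Finset.mem_image, List.mem_map, List.pairwise_map]
  constructor
  · rintro ⟨⟨b, hb, rfl⟩, h⟩
    exact ⟨b, ⟨hb, h.imp (by simp [skR])⟩, rfl⟩
  · rintro ⟨b, ⟨hb, h⟩, rfl⟩
    exact ⟨⟨b, hb, rfl⟩, h.imp (by simp [skR])⟩

lemma mem_stS_append {x τ : List ℕ} {c : ℕ} (hx : ∀ z ∈ x, z < c) (ht : ∀ z ∈ τ, c < z) (a : ℕ) :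
    a ∈ stS (x ++ c :: τ) ↔ a ∈ stS x ∨ a = c ∨ a ∈ stS τ := by
  simp only [mem_stS, List.pairwise_append, List.pairwise_cons, List.mem_append, List.mem_cons]
  constructor
  · rintro ⟨h1, h2, ⟨h3, h4⟩, h5⟩
    tauto
  · rintro (⟨h1, h2⟩ | rfl | ⟨h1, h2⟩)
    · have := hx a h1
      refine ⟨Or.inl h1, h2, ⟨?_, ?_⟩, ?_⟩
      · intro z hz; have := ht z hz; constructor <;> intro <;> omega
      · apply stR_triv; intro h; have := ht a h; omega
      · rintro p hp q (rfl | hq)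
        · constructor <;> intro <;> omega
        · have := hx p hp; have := ht q hq; constructor <;> intro <;> omega
    · refine ⟨by simp, ?_, ⟨?_, ?_⟩, ?_⟩
      · apply stR_triv; intro h; have := hx a h; omega
      · intro z hz; have := ht z hz; constructor <;> intro <;> omega
      · apply stR_triv; intro h; have := ht a h; omega
      · rintro p hp q (rfl | hq)
        · have := hx p hp; constructor <;> intro <;> omega
        · have := hx p hp; have := ht q hq; constructor <;> intro <;> omega
    · have := ht a h1
      refine ⟨by simp [h1], ?_, ⟨?_, h2⟩, ?_⟩
      · apply stR_triv; intro h; have := hx a h; omega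
      · intro z hz; have := ht z hz; constructor <;> intro <;> omega
      · rintro p hp q (rfl | hq)
        · have := hx p hp; constructor <;> intro <;> omega
        · have := hx p hp; have := ht q hq; constructor <;> intro <;> omega

lemma PM.mem {l : List ℕ} (h : PM l) {v : ℕ} (hv : v < l.length) : v ∈ l := by
  have h1 : l.toFinset ⊆ Finset.range l.length := by
    intro x hx
    simpa using h.2 x (by simpa using hx)
  have h2 : l.toFinset = Finset.range l.length := by
    apply Finset.eq_of_subset_of_card_le h1
    rw [List.toFinset_card_of_nodup h.1]; simp
  have : v ∈ l.toFinset := by rw [h2]; simpa using hv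
  simpa using this

lemma PM.split {L τ : List ℕ} {a : ℕ} (h : PM (L ++ a :: τ)) (hL : ∀ z ∈ L, z < a)
    (ht : ∀ z ∈ τ, a < z) : a = L.length ∧ PM L ∧ ∃ y, PM y ∧ L ++ a :: τ = JJ L y := by
  have hnd := h.1
  rw [List.nodup_append, List.nodup_cons] at hnd
  have hLs : L.toFinset = Finset.range a := by
    ext v
    simp only [List.mem_toFinset, Finset.mem_range]
    refine ⟨hL v, fun hv => ?_⟩
    have ha := h.2 a (by simp)
    have := h.mem (lt_trans hv ha)
    simp only [List.mem_append, List.mem_cons] at this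
    rcases this with h1 | h1 | h1
    · exact h1
    · omega
    · have := ht v h1; omega
  have ha : a = L.length := by
    rw [← List.toFinset_card_of_nodup hnd.1, hLs]; simp
  refine ⟨ha, ⟨hnd.1, fun z hz => ha ▸ hL z hz⟩, τ.map (· - (a + 1)), ⟨?_, ?_⟩, ?_⟩
  · refine List.Nodup.map_on ?_ hnd.2.1.2
    intro x hx y hy e
    have := ht x hx; have := ht y hy
    omega
  · intro z hz
    simp only [List.mem_map, List.length_map] at hz ⊢
    obtain ⟨w, hw, rfl⟩ := hz
    have := ht w hw
    have := h.2 w (by simp [hw])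
    simp only [List.length_append, List.length_cons] at this
    omega
  · unfold JJ
    rw [← ha, List.map_map]
    congr 2
    symm
    conv_rhs => rw [← List.map_id τ]
    apply List.map_congr_left
    intro z hz
    have := ht z hz
    simp; omega

lemma PM.JJ {x y : List ℕ} (hx : PM x) (hy : PM y) : PM (JJ x y) := by
  constructor
  · unfold _root_.JJ
    rw [List.nodup_append, List.nodup_cons]
    refine ⟨hx.1, ⟨?_, hy.1.map (fun p q => by simp)⟩, ?_⟩
    · simp; intros; omega
    · intro p hp q hq
      have := hx.2 p hp
      simp at hq
      rcases hq with rfl | ⟨r, hr, rfl⟩ <;> omega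
  · intro z hz
    simp only [_root_.JJ, List.mem_append, List.mem_cons, List.mem_map, List.length_append, List.length_cons,
      List.length_map] at hz ⊢
    rcases hz with h | rfl | ⟨w, hw, rfl⟩
    · have := hx.2 z h; omega
    · omega
    · have := hy.2 w hw; omega

lemma length_JJ (x y : List ℕ) : (JJ x y).length = x.length + y.length + 1 := by
  simp [JJ]; omega

lemma JJ_inj {x y x' y' : List ℕ} (h : JJ x y = JJ x' y') (hl : x.length = x'.length) :
    x = x' ∧ y = y' := by
  unfold JJ at h
  obtain ⟨h1, h2⟩ := List.append_inj h hl
  refine ⟨h1, ?_⟩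
  rw [hl, List.cons_inj_right] at h2
  exact List.map_injective_iff.2 (fun p q => by simp) h2

/-- `x` followed by a new maximum is king. -/
def KE (x : List ℕ) : Prop := KG (x ++ [x.length])

lemma KG_JJ {x y : List ℕ} : KG (JJ x y) ↔ KE x ∧ KG y ∧ 0 ∉ y.head? := by
  unfold KE KG JJ
  simp only [List.isChain_append, List.isChain_cons, List.isChain_map, List.head?_map,
    List.head?_cons]
  have : y.IsChain (fun a b => a + (x.length + 1) + 1 < b + (x.length + 1) ∨
      b + (x.length + 1) + 1 < a + (x.length + 1)) ↔
      y.IsChain (fun x y => x + 1 < y ∨ y + 1 < x) := by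
    have : (fun a b => a + (x.length + 1) + 1 < b + (x.length + 1) ∨
      b + (x.length + 1) + 1 < a + (x.length + 1)) = (fun x y => x + 1 < y ∨ y + 1 < x) := by
      funext a b
      apply propext
      omega
    rw [this]
  rw [this]
  rcases y with _ | ⟨b, y⟩
  · simp
  · simp
    constructor
    · rintro ⟨h1, ⟨h2, h3⟩, h4⟩
      refine ⟨⟨h1, h4⟩, h3, by omega⟩
    · rintro ⟨⟨h1, h4⟩, h3, h2⟩
      exact ⟨h1, ⟨by omega, h3⟩, h4⟩

lemma KE_iff {x : List ℕ} (hx : PM x) : KE x ↔ KG x ∧ ¬ ∃ z, PM z ∧ x = JJ z [] := by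
  unfold KE KG
  rw [List.isChain_append]
  rcases List.eq_nil_or_concat x with rfl | ⟨z, b, rfl⟩
  · simp [JJ]
  · simp only [List.concat_eq_append] at *
    simp
    intro _
    have hb := hx.2 b (by simp)
    simp at hb
    constructor
    · rintro h w hw e
      have := congrArg List.getLast? e
      have hl := congrArg List.length e
      simp [JJ] at this hl
      omega
    · intro h
      by_contra hc
      have hb' : b = z.length := by omega
      have hnd := hx.1
      rw [List.nodup_append] at hnd
      refine h z ⟨hnd.1, ?_⟩ (by simp [JJ, hb'])
      intro w hw
      have := hx.2 w (by simp [hw])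
      have := hnd.2.2 w hw b (by simp)
      simp at *
      omega

lemma pw {R : ℕ → ℕ → Prop} {x τ : List ℕ} {c : ℕ} :
    (x ++ c :: τ).Pairwise R ↔ x.Pairwise R ∧ τ.Pairwise R ∧ (∀ z ∈ τ, R c z) ∧ (∀ z ∈ x, R z c)
      ∧ ∀ p ∈ x, ∀ q ∈ τ, R p q := by
  simp only [List.pairwise_append, List.pairwise_cons, List.mem_cons]
  constructor
  · rintro ⟨h1, ⟨h2, h3⟩, h4⟩
    exact ⟨h1, h3, h2, fun z hz => h4 z hz c (Or.inl rfl), fun p hp q hq => h4 p hp q (Or.inr hq)⟩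
  · rintro ⟨h1, h3, h2, h4, h5⟩
    refine ⟨h1, ⟨h2, h3⟩, ?_⟩
    rintro p hp q (rfl | hq)
    · exact h4 p hp
    · exact h5 p hp q hq

/-- trichotomy of positions -/
lemma pw_tri {R : ℕ → ℕ → Prop} {l : List ℕ} (h : l.Pairwise R) {p q : ℕ} (hp : p ∈ l)
    (hq : q ∈ l) : p = q ∨ R p q ∨ R q p := by
  induction l with
  | nil => simp at hp
  | cons c l ih =>
    rw [List.pairwise_cons] at h
    simp only [List.mem_cons] at hp hq
    rcases hp with rfl | hp <;> rcases hq with rfl | hq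
    · exact Or.inl rfl
    · exact Or.inr (Or.inl (h.1 _ hq))
    · exact Or.inr (Or.inr (h.1 _ hp))
    · exact ih h.2 hp hq

lemma ocR_of {x τ : List ℕ} {c b : ℕ} (hx : ∀ z ∈ x, z < c) (ht : ∀ z ∈ τ, c < z) (hb : b ∈ skS τ) :
    (c, b) ∈ ocS (x ++ c :: τ) := by
  rw [mem_skS] at hb
  have hcb := ht b hb.1
  rw [mem_ocS, pw]
  refine ⟨by simp [hb.1], hcb, ?_, ?_, ?_, ?_, ?_⟩
  · refine List.Pairwise.imp_of_mem (R := fun _ _ => True) ?_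
      (by simp [List.pairwise_iff_getElem])
    intro p q hp hq _
    have := hx p hp; have := hx q hq
    unfold ocR; omega
  · refine List.Pairwise.imp_of_mem ?_ hb.2
    intro p q hp hq h
    have := ht p hp; have := ht q hq
    unfold skR at h
    unfold ocR; omega
  · intro z hz; have := ht z hz
    unfold ocR; omega
  · intro z hz; have := hx z hz
    unfold ocR; omega
  · intro p hp q hq
    have := hx p hp; have := ht q hq
    unfold ocR; omega

lemma ocS_append {x τ : List ℕ} {c : ℕ} (hx : ∀ z ∈ x, z < c) (ht : ∀ z ∈ τ, c < z)
    (hs : (skS τ).Nonempty) : ocS (x ++ c :: τ) = (skS τ).image (fun b => (c, b)) := by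
  obtain ⟨s, hs⟩ := hs
  rw [mem_skS] at hs
  have hcs := ht s hs.1
  ext ⟨a, b⟩
  simp only [Finset.mem_image, Prod.mk.injEq]
  constructor
  · intro h
    rw [mem_ocS, pw] at h
    obtain ⟨⟨ha, hb⟩, hab, h1, h2, h3, h4, h5⟩ := h
    have hbt : b ∈ τ := by
      simp only [List.mem_append, List.mem_cons] at hb
      rcases hb with hb | rfl | hb
      · have := h5 b hb s hs.1; have := hx b hb; unfold ocR at *; omega
      · have := h3 s hs.1; unfold ocR at *; omega
      · exact hb
    have hcb := ht b hbt
    have hac : a = c := by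
      simp only [List.mem_append, List.mem_cons] at ha
      rcases ha with ha | rfl | ha
      · have := h3 b hbt; have := hx a ha; unfold ocR at *; omega
      · rfl
      · exfalso
        have k := pw_tri (h2.and hs.2) ha hs.1
        have k2 := pw_tri (h2.and hs.2) ha hbt
        unfold ocR skR at k k2
        omega
    refine ⟨b, ?_, hac.symm, rfl⟩
    rw [mem_skS]
    refine ⟨hbt, ?_⟩
    refine List.Pairwise.imp_of_mem ?_ h2
    intro p q hp hq h
    have := ht p hp; have := ht q hq
    unfold ocR at h
    unfold skR; omega
  · rintro ⟨b, hb, rfl, rfl⟩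
    exact ocR_of hx ht hb

lemma ocS_JJ {x y : List ℕ} (hx : PM x) (hs : (skS y).Nonempty) :
    ocS (JJ x y) = (skS y).image (fun b => (x.length, b + (x.length + 1))) := by
  unfold JJ
  rw [ocS_append hx.2, skS_map, Finset.image_image]
  · rfl
  · intro z hz; simp at hz; omega
  · rw [skS_map]; exact hs.image _

lemma ocS_JJ_card {x y : List ℕ} (hx : PM x) (hs : (skS y).Nonempty) :
    (ocS (JJ x y)).card = (skS y).card := by
  rw [ocS_JJ hx hs, Finset.card_image_of_injective]
  intro p q; simp

lemma stS_JJ {x y : List ℕ} (hx : PM x) (hs : stS y = ∅) :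
    stS (JJ x y) = insert x.length (stS x) := by
  ext a
  unfold JJ
  rw [mem_stS_append hx.2 (by intro z hz; simp at hz; omega), stS_map, hs]
  simp; tauto

lemma not_mem_stS {x : List ℕ} (hx : PM x) : x.length ∉ stS x := by
  intro h
  have := hx.2 _ (mem_stS.1 h).1
  omega

lemma stS_JJ_card {x y : List ℕ} (hx : PM x) (hs : stS y = ∅) :
    (stS (JJ x y)).card = (stS x).card + 1 := by
  rw [stS_JJ hx hs, Finset.card_insert_of_notMem (not_mem_stS hx)]

lemma exists_st {l : List ℕ} (hl : PM l) (h : (stS l).Nonempty) :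
    ∃ x y, PM x ∧ PM y ∧ stS y = ∅ ∧ l = JJ x y := by
  set a := (stS l).max' h with ha
  have hm : a ∈ stS l := Finset.max'_mem _ _
  have hmax : ∀ b ∈ stS l, b ≤ a := fun b hb => Finset.le_max' _ _ hb
  clear_value a
  obtain ⟨L, τ, rfl⟩ := List.append_of_mem (mem_stS.1 hm).1
  obtain ⟨_, h2⟩ := mem_stS.1 hm
  rw [pw] at h2
  have hL : ∀ z ∈ L, z < a := fun z hz => (h2.2.2.2.1 z hz).1 rfl
  have ht : ∀ z ∈ τ, a < z := fun z hz => (h2.2.2.1 z hz).2 rfl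
  obtain ⟨e, hPL, y, hy, hJ⟩ := hl.split hL ht
  refine ⟨L, y, hPL, hy, ?_, hJ⟩
  have : stS τ = ∅ := by
    rw [Finset.eq_empty_iff_forall_notMem]
    intro b hb
    have := hmax b ((mem_stS_append hL ht b).2 (Or.inr (Or.inr hb)))
    have := ht b (mem_stS.1 hb).1
    omega
  unfold JJ at hJ
  simp at hJ
  rw [hJ.2, stS_map] at this
  simpa using this

lemma exists_oc {l : List ℕ} (hl : PM l) (h : (ocS l).Nonempty) :
    ∃ x y, PM x ∧ PM y ∧ (skS y).Nonempty ∧ l = JJ x y := by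
  obtain ⟨⟨a, b⟩, hm⟩ := h
  obtain ⟨L, τ, rfl⟩ := List.append_of_mem (mem_ocS.1 hm).1.1
  obtain ⟨⟨_, hb⟩, hab, h2⟩ := mem_ocS.1 hm
  rw [pw] at h2
  have hL : ∀ z ∈ L, z < a := fun z hz => (h2.2.2.2.1 z hz).1 rfl
  have ht : ∀ z ∈ τ, a < z := fun z hz => (h2.2.2.1 z hz).2.1 rfl
  obtain ⟨e, hPL, y, hy, hJ⟩ := hl.split hL ht
  refine ⟨L, y, hPL, hy, ?_, hJ⟩
  have hbt : b ∈ τ := by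
    simp only [List.mem_append, List.mem_cons] at hb
    rcases hb with hb | rfl | hb
    · have := hL b hb; omega
    · omega
    · exact hb
  have : (skS τ).Nonempty := by
    refine ⟨b, mem_skS.2 ⟨hbt, ?_⟩⟩
    refine List.Pairwise.imp_of_mem ?_ h2.2.1
    intro p q hp hq h
    have := ht p hp; have := ht q hq
    unfold ocR at h
    unfold skR; omega
  unfold JJ at hJ
  simp at hJ
  rw [hJ.2, skS_map] at this
  simpa using this

lemma head_st {y : List ℕ} (hy : PM y) (h : stS y = ∅) : 0 ∉ y.head? := by
  rcases y with _ | ⟨b, y⟩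
  · simp
  · intro hb
    simp at hb
    subst hb
    have : 0 ∈ stS ([] ++ 0 :: y) := by
      rw [mem_stS_append]
      · simp
      · simp
      · intro z hz
        have := hy.1
        rw [List.nodup_cons] at this
        rcases Nat.eq_zero_or_pos z with rfl | h
        · tauto
        · exact h
    simp [h] at this

lemma head_sk {y : List ℕ} (h : (skS y).Nonempty) : 0 ∉ y.head? ↔ y ≠ [0] := by
  rcases y with _ | ⟨b, y⟩
  · simp
  · simp
    refine ⟨fun h hb => by omega, fun hb h0 => ?_⟩
    subst h0
    obtain ⟨s, hs⟩ := h
    rw [mem_skS, List.pairwise_cons] at hs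
    obtain ⟨h1, h2, h3⟩ := hs
    simp only [List.mem_cons] at h1
    rcases y with _ | ⟨c, y⟩
    · simp at hb
    · rcases h1 with rfl | h1
      · have := (h2 c (by simp)).2 rfl; omega
      · have := (h2 s h1).1 rfl; omega

/-- The word of a permutation. -/
def toL {n : ℕ} (σ : Equiv.Perm (Fin n)) : List ℕ := List.ofFn (fun i => (σ i : ℕ))

lemma toL_inj {n : ℕ} : Function.Injective (toL (n := n)) := by
  intro σ τ h
  have := List.ofFn_injective h
  ext i
  exact congrFun this i

noncomputable def PP (n : ℕ) : Finset (List ℕ) := Finset.univ.image (toL (n := n))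

lemma mem_PP {n : ℕ} {l : List ℕ} : l ∈ PP n ↔ PM l ∧ l.length = n := by
  unfold PP
  simp only [Finset.mem_image, Finset.mem_univ, true_and]
  constructor
  · rintro ⟨σ, rfl⟩
    refine ⟨⟨?_, ?_⟩, by simp [toL]⟩
    · unfold toL
      rw [List.nodup_ofFn]
      intro i j h
      exact σ.injective (Fin.ext h)
    · intro x hx
      simp [toL, List.mem_ofFn] at hx ⊢
      obtain ⟨i, rfl⟩ := hx
      exact (σ i).2
  · rintro ⟨h, rfl⟩
    let f : Fin l.length → Fin l.length := fun i => ⟨l[i], h.2 _ (by simp)⟩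
    have hf : Function.Injective f := by
      intro i j e
      have : l[i] = l[j] := congrArg Fin.val e
      exact Fin.ext ((List.Nodup.getElem_inj_iff h.1).1 this)
    refine ⟨Equiv.ofBijective f (Finite.injective_iff_bijective.1 hf), ?_⟩
    simp only [toL, Equiv.ofBijective_apply, f]
    exact List.ofFn_getElem

lemma KG_toL {n : ℕ} (σ : Equiv.Perm (Fin n)) : KG (toL σ) ↔ IsKing σ := by
  unfold KG IsKing toL
  rw [List.isChain_iff_getElem]
  simp only [List.length_ofFn, List.getElem_ofFn]
  constructor
  · intro h i hi
    have := h i hi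
    simp only [Fin.eta] at this
    rw [lt_abs]; omega
  · intro h i hi
    have := h ⟨i, by omega⟩ hi
    rw [lt_abs] at this
    simp only at this
    omega

lemma oc_toL {n : ℕ} (σ : Equiv.Perm (Fin n)) (i j : Fin n) :
    OccP σ i j ↔ ((σ i : ℕ), (σ j : ℕ)) ∈ ocS (toL σ) := by
  have inj : ∀ p q : Fin n, (σ p : ℕ) = σ q → p = q := fun p q h => σ.injective (Fin.ext h)
  rw [mem_ocS]
  unfold toL
  rw [List.pairwise_ofFn]
  simp only [List.mem_ofFn, exists_apply_eq_apply, and_true, true_and, OccP, Fin.lt_def]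
  constructor
  · rintro ⟨h1, h2, h3, h4, h5⟩
    refine ⟨h2, fun p q hpq => ⟨fun e => ?_, fun e => ?_, fun e => ?_, fun e => ?_⟩⟩
    · cases inj _ _ e
      exact h3 p hpq
    · cases inj _ _ e
      rcases lt_trichotomy (q : ℕ) j with h | h | h
      · have := h4 q hpq h; omega
      · cases Fin.ext h; exact h2
      · exact (h5 q h).1
    · cases inj _ _ e
      rcases lt_trichotomy (p : ℕ) i with h | h | h
      · have := h3 p h; omega
      · cases Fin.ext h; exact Or.inl le_rfl
      · exact Or.inr (h4 p h hpq)
    · cases inj _ _ e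
      exact h5 q hpq
  · rintro ⟨h1, h⟩
    refine ⟨?_, h1, fun k hk => (h hk).1 rfl, fun k hk hk' => ?_, fun k hk => (h hk).2.2.2 rfl⟩
    · rcases lt_trichotomy (i : ℕ) j with h' | h' | h'
      · exact h'
      · cases Fin.ext h'; omega
      · have := (h h').1 rfl; omega
    · have a := (h hk).2.1 rfl
      have b := (h hk').2.2.1 rfl
      omega

lemma occP_toL {n : ℕ} (σ : Equiv.Perm (Fin n)) : occP σ = (ocS (toL σ)).card := by
  unfold occP
  rw [← Nat.card_eq_finsetCard]
  refine Nat.card_congr (Equiv.ofBijective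
    (fun p => ⟨((σ p.1.1 : ℕ), (σ p.1.2 : ℕ)), (oc_toL σ _ _).1 p.2⟩) ⟨?_, ?_⟩)
  · rintro ⟨⟨i, j⟩, hp⟩ ⟨⟨i', j'⟩, hq⟩ h
    simp [Fin.val_inj] at h
    simp [h]
  · rintro ⟨⟨a, b⟩, h⟩
    obtain ⟨⟨ha, hb⟩, -⟩ := mem_ocS.1 h
    simp only [toL, List.mem_ofFn] at ha hb
    obtain ⟨i, rfl⟩ := ha
    obtain ⟨j, rfl⟩ := hb
    exact ⟨⟨(i, j), (oc_toL σ i j).2 h⟩, rfl⟩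

open Classical in
/-- Weighted generating function. -/
noncomputable def gf (Z : List ℕ → Prop) (w : List ℕ → Polynomial ℚ) :
    PowerSeries (Polynomial ℚ) :=
  PowerSeries.mk fun n => ∑ l ∈ (PP n).filter Z, w l

lemma gf_congr {Z Z' : List ℕ → Prop} {w w' : List ℕ → Polynomial ℚ}
    (h : ∀ l, PM l → (Z l ↔ Z' l)) (hw : ∀ l, PM l → Z l → w l = w' l) : gf Z w = gf Z' w' := by
  classical
  ext1 n
  simp only [gf, PowerSeries.coeff_mk]
  refine Finset.sum_congr ?_ ?_
  · ext l
    simp only [Finset.mem_filter, mem_PP]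
    constructor
    · rintro ⟨h1, h2⟩; exact ⟨h1, (h l h1.1).1 h2⟩
    · rintro ⟨h1, h2⟩; exact ⟨h1, (h l h1.1).2 h2⟩
  · intro l hl
    simp only [Finset.mem_filter, mem_PP] at hl
    exact hw l hl.1.1 ((h l hl.1.1).2 hl.2)

lemma gf_split (Z Y : List ℕ → Prop) (w : List ℕ → Polynomial ℚ) :
    gf Z w = gf (fun l => Z l ∧ Y l) w + gf (fun l => Z l ∧ ¬ Y l) w := by
  classical
  ext1 n
  simp only [gf, PowerSeries.coeff_mk, map_add]
  rw [← Finset.sum_filter_add_sum_filter_not _ Y, Finset.filter_filter, Finset.filter_filter]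
  congr!

lemma gf_reverse (Z : List ℕ → Prop) (w : List ℕ → Polynomial ℚ) :
    gf (fun l => Z l.reverse) (fun l => w l.reverse) = gf Z w := by
  classical
  ext1 n
  simp only [gf, PowerSeries.coeff_mk]
  have key : ∀ l : List ℕ, PM l → PM l.reverse := by
    intro l h
    exact ⟨List.nodup_reverse.2 h.1, fun x hx => by simpa using h.2 x (by simpa using hx)⟩
  refine Finset.sum_bij' (fun l _ => l.reverse) (fun l _ => l.reverse) ?_ ?_ ?_ ?_ ?_
  · intro l hl
    simp only [Finset.mem_filter, mem_PP] at hl ⊢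
    exact ⟨⟨key l hl.1.1, by simpa using hl.1.2⟩, hl.2⟩
  · intro l hl
    simp only [Finset.mem_filter, mem_PP] at hl ⊢
    exact ⟨⟨key l hl.1.1, by simpa using hl.1.2⟩, by simpa using hl.2⟩
  · simp
  · simp
  · simp

lemma gf_single (Z : List ℕ → Prop) (w : List ℕ → Polynomial ℚ) (l₀ : List ℕ) (h₀ : PM l₀)
    (h : ∀ l, PM l → (Z l ↔ l = l₀)) :
    gf Z w = PowerSeries.C (w l₀) * PowerSeries.X ^ l₀.length := by
  classical
  ext1 n
  simp only [gf, PowerSeries.coeff_mk, PowerSeries.coeff_C_mul, PowerSeries.coeff_X_pow]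
  split_ifs with hn
  · have : (PP n).filter Z = {l₀} := by
      ext l
      simp only [Finset.mem_filter, mem_PP, Finset.mem_singleton]
      constructor
      · rintro ⟨h1, h2⟩; exact (h l h1.1).1 h2
      · rintro rfl; exact ⟨⟨h₀, hn.symm⟩, (h _ h₀).2 rfl⟩
    rw [this]; simp
  · rw [mul_zero]
    apply Finset.sum_eq_zero
    intro l hl
    simp only [Finset.mem_filter, mem_PP] at hl
    have := (h l hl.1.1).1 hl.2
    subst this
    exact absurd hl.1.2.symm hn

lemma gf_conv (X Y Z : List ℕ → Prop) (w wx wy : List ℕ → Polynomial ℚ)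
    (h1 : ∀ x y, PM x → PM y → X x → Y y → Z (JJ x y) ∧ w (JJ x y) = wx x * wy y)
    (h2 : ∀ l, PM l → Z l → ∃ x y, PM x ∧ PM y ∧ X x ∧ Y y ∧ l = JJ x y)
    (h3 : ∀ x y x' y', PM x → PM y → X x → Y y → PM x' → PM y' → X x' → Y y' →
      JJ x y = JJ x' y' → x.length = x'.length) :
    gf Z w = PowerSeries.X * (gf X wx * gf Y wy) := by
  classical
  ext1 n
  rcases n with _ | n
  · rw [PowerSeries.coeff_zero_X_mul]
    simp only [gf, PowerSeries.coeff_mk]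
    apply Finset.sum_eq_zero
    intro l hl
    simp only [Finset.mem_filter, mem_PP] at hl
    obtain ⟨x, y, -, -, -, -, rfl⟩ := h2 l hl.1.1 hl.2
    have := hl.1.2
    rw [length_JJ] at this
    omega
  · rw [PowerSeries.coeff_succ_X_mul, PowerSeries.coeff_mul]
    simp only [gf, PowerSeries.coeff_mk, Finset.sum_mul_sum, ← Finset.sum_product']
    rw [Finset.sum_sigma']
    symm
    refine Finset.sum_bij (fun s _ => JJ s.2.1 s.2.2) ?_ ?_ ?_ ?_
    · rintro ⟨⟨i, j⟩, ⟨x, y⟩⟩ hs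
      simp only [Finset.mem_sigma, Finset.mem_product, Finset.mem_filter,
        mem_PP] at hs ⊢
      obtain ⟨hij, ⟨⟨hx, hxi⟩, hX⟩, ⟨hy, hyj⟩, hY⟩ := hs
      refine ⟨⟨hx.JJ hy, ?_⟩, (h1 x y hx hy hX hY).1⟩
      have hij : i + j = n := Finset.HasAntidiagonal.mem_antidiagonal.1 hij
      rw [length_JJ]; omega
    · rintro ⟨⟨i, j⟩, ⟨x, y⟩⟩ hs ⟨⟨i', j'⟩, ⟨x', y'⟩⟩ hs' e
      simp only [Finset.mem_sigma, Finset.mem_product, Finset.mem_filter,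
        mem_PP] at hs hs' e
      obtain ⟨hij, ⟨⟨hx, hxi⟩, hX⟩, ⟨hy, hyj⟩, hY⟩ := hs
      obtain ⟨hij', ⟨⟨hx', hxi'⟩, hX'⟩, ⟨hy', hyj'⟩, hY'⟩ := hs'
      obtain ⟨rfl, rfl⟩ := JJ_inj e (h3 x y x' y' hx hy hX hY hx' hy' hX' hY' e)
      subst hxi hyj hxi' hyj'
      rfl
    · intro l hl
      simp only [Finset.mem_filter, mem_PP] at hl
      obtain ⟨x, y, hx, hy, hX, hY, rfl⟩ := h2 l hl.1.1 hl.2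
      refine ⟨⟨(x.length, y.length), (x, y)⟩, ?_, rfl⟩
      have := hl.1.2
      rw [length_JJ] at this
      simp only [Finset.mem_sigma, Finset.mem_product, Finset.mem_filter,
        mem_PP]
      refine ⟨Finset.HasAntidiagonal.mem_antidiagonal.2 (by omega), ⟨⟨hx, by trivial⟩, hX⟩, ⟨hy, by trivial⟩, hY⟩
    · rintro ⟨⟨i, j⟩, ⟨x, y⟩⟩ hs
      simp only [Finset.mem_sigma, Finset.mem_product, Finset.mem_filter,
        mem_PP] at hs ⊢
      obtain ⟨hij, ⟨⟨hx, hxi⟩, hX⟩, ⟨hy, hyj⟩, hY⟩ := hs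
      exact (h1 x y hx hy hX hY).2.symm

lemma kingAu_eq : kingAu = gf KG (fun _ => 1) := by
  classical
  ext1 n
  simp only [kingAu, gf, PowerSeries.coeff_mk, kingCount]
  rw [Finset.sum_filter, PP, Finset.sum_image (fun a _ b _ h => toL_inj h)]
  simp only [KG_toL, Finset.sum_boole]
  rw [Nat.card_eq_fintype_card, Fintype.card_subtype]

lemma Etu_eq : Etu = gf KG (fun l => Polynomial.X ^ (ocS l).card) := by
  classical
  ext1 n
  simp only [Etu, gf, PowerSeries.coeff_mk]
  rw [Finset.sum_filter, PP, Finset.sum_image (fun a _ b _ h => toL_inj h)]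
  simp only [KG_toL, occP_toL]

lemma gf_mul (Z : List ℕ → Prop) (w : List ℕ → Polynomial ℚ) (c : Polynomial ℚ) :
    gf Z (fun l => w l * c) = PowerSeries.C c * gf Z w := by
  ext1 n
  rw [PowerSeries.coeff_C_mul]
  simp only [gf, PowerSeries.coeff_mk]
  rw [← Finset.sum_mul, mul_comm]

/-- strong point generating function -/
noncomputable def Fg (u : Polynomial ℚ) := gf KG (fun l => u ^ (stS l).card)
noncomputable def Gg (u : Polynomial ℚ) := gf KE (fun l => u ^ (stS l).card)
noncomputable def Ng := gf (fun l => KG l ∧ stS l = ∅) (fun _ => 1)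
noncomputable def Sg (u : Polynomial ℚ) :=
  gf (fun l => KG l ∧ (skS l).Nonempty ∧ l ≠ [0]) (fun l => u ^ (skS l).card)
noncomputable def Eg (u : Polynomial ℚ) := gf KG (fun l => u ^ (ocS l).card)
noncomputable def Zg := gf (fun l => KG l ∧ ocS l = ∅) (fun _ => 1)

lemma stS_nil : stS [] = ∅ := by simp [stS]

lemma D3 (u : Polynomial ℚ) : Fg u = (1 + PowerSeries.C u * T) * Gg u := by
  unfold Fg Gg T
  rw [gf_split KG (fun l => ∃ z, PM z ∧ l = JJ z [])]
  rw [gf_conv KE (fun y => y = []) (fun l => KG l ∧ ∃ z, PM z ∧ l = JJ z [])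
    _ (fun l => u ^ (stS l).card * u) (fun _ => 1), gf_mul]
  · rw [gf_single (fun y => y = []) _ [] ⟨by simp, by simp⟩ (by simp)]
    rw [gf_congr (Z := fun l => KG l ∧ ¬ ∃ z, PM z ∧ l = JJ z []) (Z' := KE)
      (w' := fun l => u ^ (stS l).card)]
    · simp; ring
    · intro l hl; exact (KE_iff hl).symm
    · intros; rfl
  · rintro x y hx hy hX rfl
    refine ⟨⟨KG_JJ.2 ⟨hX, by simp [KG], by simp⟩, x, hx, rfl⟩, ?_⟩
    rw [stS_JJ_card hx stS_nil, pow_succ, mul_one]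
  · rintro l hl ⟨hk, z, hz, rfl⟩
    exact ⟨z, [], hz, ⟨by simp, by simp⟩, (KG_JJ.1 hk).1, rfl, rfl⟩
  · rintro x y x' y' - - - rfl - - - rfl e
    have := congrArg List.length e
    simpa [length_JJ] using this

lemma D2 (u : Polynomial ℚ) : gf (fun l => KG l ∧ (stS l).Nonempty) (fun l => u ^ (stS l).card)
    = PowerSeries.C u * T * Gg u * Ng := by
  unfold Gg T Ng
  rw [gf_conv KE (fun l => KG l ∧ stS l = ∅) _ _ (fun l => u ^ (stS l).card * u) (fun _ => 1),
    gf_mul]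
  · ring
  · rintro x y hx hy hX ⟨hY, hs⟩
    refine ⟨⟨KG_JJ.2 ⟨hX, hY, head_st hy hs⟩, ?_⟩, ?_⟩
    · rw [stS_JJ hx hs]; simp
    · rw [stS_JJ_card hx hs, pow_succ, mul_one]
  · rintro l hl ⟨hk, hs⟩
    obtain ⟨x, y, hx, hy, hs', rfl⟩ := exists_st hl hs
    have := KG_JJ.1 hk
    exact ⟨x, y, hx, hy, this.1, ⟨this.2.1, hs'⟩, rfl⟩
  · rintro x y x' y' hx hy - ⟨-, hs⟩ hx' hy' - ⟨-, hs'⟩ e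
    have e := congrArg stS e
    rw [stS_JJ hx hs, stS_JJ hx' hs'] at e
    have k1 : x.length ∈ insert x'.length (stS x') := by rw [← e]; simp
    have k2 : x'.length ∈ insert x.length (stS x) := by rw [e]; simp
    rw [Finset.mem_insert] at k1 k2
    rcases k1 with k1 | k1
    · exact k1
    rcases k2 with k2 | k2
    · exact k2.symm
    have := hx'.2 _ (mem_stS.1 k1).1
    have := hx.2 _ (mem_stS.1 k2).1
    omega

lemma D2' (u : Polynomial ℚ) : Fg u = Ng + PowerSeries.C u * T * Gg u * Ng := by
  rw [← D2, Fg, gf_split KG (fun l => stS l = ∅)]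
  congr 1
  · unfold Ng
    apply gf_congr
    · simp
    · rintro l - ⟨-, h⟩
      simp [h]
  · apply gf_congr
    · intro l _; rw [Finset.nonempty_iff_ne_empty]
    · simp

lemma KG_reverse (l : List ℕ) : KG l.reverse ↔ KG l := by
  unfold KG
  rw [List.isChain_reverse]
  simp only [or_comm]

lemma DS (u : Polynomial ℚ) : Fg u = Ng + Sg u + PowerSeries.C u * T := by
  have h0 : stS [0] = {0} := by
    ext a
    simp [mem_stS]
  rw [D2', ← D2, add_assoc]
  congr 1
  unfold Sg
  rw [← gf_reverse (fun l => KG l ∧ (skS l).Nonempty ∧ l ≠ [0])]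
  simp only [skS_reverse, KG_reverse]
  rw [gf_split _ (fun l => l ≠ [0])]
  congr 1
  · apply gf_congr
    · intro l _
      rw [Ne, Ne, List.reverse_eq_iff, and_assoc]
      simp
    · simp
  · rw [gf_single _ _ [0] ⟨by simp, by simp⟩]
    · simp [h0, T]
    · intro l _
      constructor
      · rintro ⟨_, h⟩; exact not_not.1 h
      · rintro rfl; simp [h0, KG]

lemma D1 (u : Polynomial ℚ) : Eg u = Zg + T * (Gg 1 * Sg u) := by
  unfold Eg Zg Gg Sg T
  rw [gf_split KG (fun l => ocS l = ∅)]
  congr 1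
  · apply gf_congr
    · simp
    · rintro l - ⟨-, h⟩
      simp [h]
  · apply gf_conv
    · rintro x y hx hy hX ⟨hY, hs, h0⟩
      refine ⟨⟨KG_JJ.2 ⟨hX, hY, (head_sk hs).2 h0⟩, ?_⟩, ?_⟩
      · rw [ocS_JJ hx hs, ← Ne, ← Finset.nonempty_iff_ne_empty]
        exact hs.image _
      · rw [ocS_JJ_card hx hs]; simp
    · rintro l hl ⟨hk, hs⟩
      rw [← Ne, ← Finset.nonempty_iff_ne_empty] at hs
      obtain ⟨x, y, hx, hy, hs', rfl⟩ := exists_oc hl hs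
      have := KG_JJ.1 hk
      exact ⟨x, y, hx, hy, this.1, ⟨this.2.1, hs', (head_sk hs').1 this.2.2⟩, rfl⟩
    · rintro x y x' y' hx hy - ⟨-, hs, -⟩ hx' hy' - ⟨-, hs', -⟩ e
      have e := congrArg ocS e
      rw [ocS_JJ hx hs, ocS_JJ hx' hs'] at e
      obtain ⟨b, hb⟩ := hs
      have : (x.length, b + (x.length + 1)) ∈
          (skS y').image (fun b => (x'.length, b + (x'.length + 1))) := by
        rw [← e]
        exact Finset.mem_image_of_mem _ hb
      rw [Finset.mem_image] at this
      obtain ⟨c, -, hc⟩ := this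
      exact (congrArg Prod.fst hc).symm

theorem statement_14 :
    (1 + T) * (1 + T * (1 + U + U * T) + T * (1 - U) * kingAu) * Etu
      = ((1 + T) * (1 + T * (1 + U + U * T) + T * (1 - U) * kingAu)
          + T ^ 2 * (1 - U)
            * ((1 + T * (1 + U + U * T) + T * (1 - U) * kingAu) - kingAu ^ 2))
          * kingAu := by
  have hA : kingAu = Eg 1 := by rw [kingAu_eq]; simp [Eg]
  have hA' : kingAu = Fg 1 := by rw [kingAu_eq]; simp [Fg]
  have hE : Etu = Eg Polynomial.X := Etu_eq
  have e1 := D1 Polynomial.X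
  have e2 := D1 1
  have f1 := D3 Polynomial.X
  have f2 := D3 1
  have g1 := D2' Polynomial.X
  have g2 := D2' 1
  have s1 := DS Polynomial.X
  have s2 := DS 1
  rw [← hE] at e1
  rw [← hA] at e2
  rw [← hA', map_one] at f2 g2 s2
  change _ = (1 + U * T) * _ at f1
  change _ = _ + U * T * _ * _ at g1
  change _ = _ + _ + U * T at s1
  generalize Etu = E at *
  generalize kingAu = A at *
  generalize Fg Polynomial.X = F at *
  generalize Gg Polynomial.X = G at *
  generalize Gg 1 = L at *
  generalize Ng = N at *
  generalize Zg = Z at *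
  generalize Sg Polynomial.X = S at *
  generalize Sg 1 = S' at *
  generalize T = t at *
  generalize U = u at *
  clear hA hA' hE
  have k1 : E - A = t * L * (F - A - u * t + t) := by
    linear_combination e1 - e2 - t * L * s1 + t * L * s2
  have k2 : (1 + t) * (E - A) = t * A * (F - A - u * t + t) := by
    linear_combination (1 + t) * k1 - t * (F - A - u * t + t) * f2
  have k3 : F * (1 + t * L) = A * (1 + u * t * G) := by
    linear_combination (1 + t * L) * g1 - (1 + u * t * G) * g2
  have k4 : (F - A) * ((1 + t) * (1 + u * t)) + (1 - u) * t * F * A = 0 := by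
    linear_combination (1 + t) * (1 + u * t) * k3 + t * F * (1 + u * t) * f2
      - u * t * A * (1 + t) * f1
  linear_combination (1 + t * (1 + u + u * t) + t * (1 - u) * A) * k2 + t * A * k4
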